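/- arXiv:1404.3378 — 2 statements merged into one kernel-verified Lean document; each statement's English description precedes it below -/
import Mathlib

section
/- Let K ≥ 1 and n ≥ 4K² be integers, let n' = ⌊n/(2K)⌋, and let x_1, …, x_{n'} be independent uniformly random K-element subsets of [n]. Then with probability at least 1 − exp(−2^{−(2K+3)}·n'), the number of indices r ∈ [n'] such that x_r is disjoint from x_s for every s < r is at least 2^{−(K+2)}·n'. -/
open MeasureTheory ProbabilityTheory

lemma gdc_choose (K n M : ℕ) (h : n + 2 * K ≤ 2 * M) :
    n.choose K ≤ 2 ^ K * M.choose K := by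
  have h1 : n.descFactorial K ≤ 2 ^ K * M.descFactorial K := by
    calc n.descFactorial K ≤ n ^ K := Nat.descFactorial_le_pow n K
      _ ≤ (2 * (M + 1 - K)) ^ K := Nat.pow_le_pow_left (by omega) K
      _ = 2 ^ K * (M + 1 - K) ^ K := mul_pow _ _ _
      _ ≤ _ := Nat.mul_le_mul_left _ (Nat.pow_sub_le_descFactorial M K)
  rw [Nat.descFactorial_eq_factorial_mul_choose, Nat.descFactorial_eq_factorial_mul_choose] at h1
  have h2 := Nat.factorial_pos K
  have h3 : K.factorial * n.choose K ≤ K.factorial * (2 ^ K * M.choose K) := by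
    calc _ ≤ _ := h1
      _ = _ := by ring
  exact Nat.le_of_mul_le_mul_left h3 h2

/-- The type of `K`-subsets of `Fin n`. -/
abbrev GdcT (K n : ℕ) : Type := {A : Finset (Fin n) // A.card = K}

lemma gdc_cardT (K n : ℕ) : Fintype.card (GdcT K n) = n.choose K := by
  have := Fintype.card_finset_len (α := Fin n) K
  simpa using this

open Classical in
lemma gdc_step (K n m : ℕ) (h : 2 * K * (m + 1) ≤ n) (f : Fin m → GdcT K n) :
    ∑ a : GdcT K n, (if ∀ s, Disjoint a.1 (f s).1 then (1 / 2 : ℝ) else 1)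
      ≤ (n.choose K : ℝ) * (1 - (1 / 2) ^ K / 2) := by
  set U : Finset (Fin n) := Finset.univ.biUnion (fun s => (f s).1) with hU
  have hUc : U.card ≤ m * K := by
    have := Finset.card_biUnion_le_card_mul Finset.univ (fun s => (f s).1) K
      (fun s _ => (f s).2.le)
    simpa using this
  set G : Finset (GdcT K n) := Finset.univ.filter (fun a => ∀ s, Disjoint a.1 (f s).1) with hG
  have hGc : (Uᶜ.card).choose K ≤ G.card := by
    rw [← Finset.card_powersetCard]
    have : Finset.powersetCard K Uᶜ ⊆ G.image (fun a => a.1) := by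
      intro A hA
      rw [Finset.mem_powersetCard] at hA
      rw [Finset.mem_image]
      refine ⟨⟨A, hA.2⟩, ?_, rfl⟩
      rw [hG, Finset.mem_filter]
      refine ⟨Finset.mem_univ _, fun s => ?_⟩
      rw [Finset.disjoint_left]
      intro x hx hx'
      have h1 := hA.1 hx
      rw [Finset.mem_compl] at h1
      exact h1 (Finset.mem_biUnion.2 ⟨s, Finset.mem_univ _, hx'⟩)
    exact (Finset.card_le_card this).trans Finset.card_image_le
  have hc : n.choose K ≤ 2 ^ K * G.card := by
    refine (gdc_choose K n Uᶜ.card ?_).trans (Nat.mul_le_mul_left _ hGc)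
    rw [Finset.card_compl, Fintype.card_fin]
    have : 2 * K * (m + 1) = 2 * (m * K) + 2 * K := by ring
    omega
  have hs : ∑ a : GdcT K n, (if ∀ s, Disjoint a.1 (f s).1 then (1 / 2 : ℝ) else 1)
      = (n.choose K : ℝ) - G.card / 2 := by
    have : ∀ a : GdcT K n, (if ∀ s, Disjoint a.1 (f s).1 then (1 / 2 : ℝ) else 1)
        = 1 - (if ∀ s, Disjoint a.1 (f s).1 then (1 : ℝ) else 0) / 2 := by
      intro a; split_ifs <;> norm_num
    rw [Finset.sum_congr rfl (fun a _ => this a), Finset.sum_sub_distrib, ← Finset.sum_div,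
      Finset.sum_boole, ← gdc_cardT K n]
    simp [hG]
  rw [hs]
  have hc' : (n.choose K : ℝ) ≤ 2 ^ K * G.card := by exact_mod_cast hc
  have : (n.choose K : ℝ) * (1 / 2) ^ K ≤ G.card := by
    rw [one_div, inv_pow, ← div_eq_mul_inv, div_le_iff₀ (by positivity)]
    linarith
  linarith

open Classical in
lemma gdc_sum (K n : ℕ) (m : ℕ) (h : 2 * K * m ≤ n) :
    ∑ f : Fin m → GdcT K n,
      ∏ r, (if ∀ s, s < r → Disjoint (f r).1 (f s).1 then (1 / 2 : ℝ) else 1)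
      ≤ ((n.choose K : ℝ) * (1 - (1 / 2) ^ K / 2)) ^ m := by
  induction m with
  | zero => simp
  | succ m ih =>
    have h' : 2 * K * m ≤ n := by
      refine le_trans ?_ h
      exact Nat.mul_le_mul_left _ (Nat.le_succ m)
    have ih := ih h'
    rw [← (Fin.snocEquiv (fun _ : Fin (m + 1) => GdcT K n)).sum_comp, Fintype.sum_prod_type_right]
    have hnn : (0 : ℝ) ≤ (n.choose K : ℝ) * (1 - (1 / 2) ^ K / 2) := by
      have : ((1 : ℝ) / 2) ^ K ≤ 1 := pow_le_one₀ (by norm_num) (by norm_num)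
      apply mul_nonneg (by positivity); linarith
    rw [pow_succ]
    refine le_trans ?_ (mul_le_mul_of_nonneg_right ih hnn)
    rw [Finset.sum_mul]
    refine Finset.sum_le_sum fun f _ => ?_
    refine le_trans (le_of_eq ?_) (mul_le_mul_of_nonneg_left (gdc_step K n m h f) ?_)
    · rw [Finset.mul_sum]
      refine Finset.sum_congr rfl fun a _ => ?_
      rw [Fin.prod_univ_castSucc]
      congr 1
      · refine Finset.prod_congr rfl fun r _ => ?_
        congr 1
        simp [Fin.snocEquiv, Fin.forall_fin_succ', Fin.castSucc_lt_castSucc_iff,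
          (Fin.castSucc_lt_last r).not_gt]
      · congr 1
        simp [Fin.snocEquiv, Fin.forall_fin_succ', Fin.castSucc_lt_last]
    · refine Finset.prod_nonneg fun r _ => ?_
      split_ifs <;> norm_num

open Classical in
lemma gdc_bad (K n m : ℕ) (h : 2 * K * m ≤ n) (a : ℝ) :
    ((Finset.univ.filter (fun f : Fin m → GdcT K n =>
      (Nat.card {r : Fin m // ∀ s : Fin m, s < r → Disjoint (f r).1 (f s).1} : ℝ) < a)).card : ℝ)
      ≤ 2 ^ a * ((n.choose K : ℝ) * (1 - (1 / 2) ^ K / 2)) ^ m := by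
  refine le_trans ?_ (mul_le_mul_of_nonneg_left (gdc_sum K n m h) (by positivity))
  rw [Finset.mul_sum, Finset.card_eq_sum_ones, Nat.cast_sum, Finset.sum_filter]
  refine Finset.sum_le_sum fun f _ => ?_
  have hW : ∏ r, (if ∀ s, s < r → Disjoint (f r).1 (f s).1 then (1 / 2 : ℝ) else 1)
      = (1 / 2) ^ (Nat.card {r : Fin m // ∀ s : Fin m, s < r → Disjoint (f r).1 (f s).1}) := by
    rw [Finset.prod_ite]
    simp [Fintype.card_subtype]
  rw [hW]
  split_ifs with hlt
  · rw [one_div, inv_pow, ← Real.rpow_natCast, ← div_eq_mul_inv,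
      le_div_iff₀ (by positivity)]
    simp only [Nat.cast_one, one_mul]
    exact Real.rpow_le_rpow_of_exponent_le (by norm_num) hlt.le
  · positivity

lemma gdc_num (K m : ℕ) :
    (2 : ℝ) ^ ((2 : ℝ) ^ (-((K : ℝ) + 2)) * (m : ℝ)) * (1 - (1 / 2) ^ K / 2) ^ m
      ≤ Real.exp (-(2 : ℝ) ^ (-(2 * (K : ℝ) + 3)) * (m : ℝ)) := by
  set p : ℝ := (1 / 2) ^ K with hp
  have hp0 : 0 < p := by positivity
  have hp1 : p ≤ 1 := pow_le_one₀ (by norm_num) (by norm_num)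
  have e1 : (2 : ℝ) ^ (-((K : ℝ) + 2)) = p / 4 := by
    rw [Real.rpow_neg (by norm_num), Real.rpow_add (by norm_num), Real.rpow_natCast, hp, one_div, inv_pow]
    norm_num [mul_inv]; ring
  have e2 : (2 : ℝ) ^ (-(2 * (K : ℝ) + 3)) = p ^ 2 / 8 := by
    have : (2 * (K : ℝ) + 3) = ((2 * K + 3 : ℕ) : ℝ) := by push_cast; ring
    rw [this, Real.rpow_neg (by norm_num), Real.rpow_natCast, hp, pow_add, one_div, inv_pow,
      mul_comm 2 K, pow_mul]
    norm_num [mul_inv]; ring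
  rw [e1, e2]
  have b1 : (2 : ℝ) ^ (p / 4 * (m : ℝ)) ≤ Real.exp (p / 4 * m) := by
    rw [← Real.exp_one_rpow]
    refine Real.rpow_le_rpow (by norm_num) ?_ (by positivity)
    linarith [Real.add_one_le_exp (1 : ℝ)]
  have b2 : (1 - p / 2) ^ m ≤ Real.exp (-(p / 2) * m) := by
    rw [mul_comm, Real.exp_nat_mul]
    refine pow_le_pow_left₀ (by linarith) ?_ m
    linarith [Real.add_one_le_exp (-(p / 2))]
  calc _ ≤ Real.exp (p / 4 * m) * Real.exp (-(p / 2) * m) :=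
        mul_le_mul b1 b2 (pow_nonneg (by linarith) m) (by positivity)
    _ = Real.exp (-(p / 4) * m) := by rw [← Real.exp_add]; ring_nf
    _ ≤ _ := by
        apply Real.exp_le_exp.2
        apply mul_le_mul_of_nonneg_right _ (by positivity)
        nlinarith

/-- Concentration claim from the proof of Lemma 3.1: let `K ≥ 1`, `n ≥ 4K²`,
`n' = ⌊n/(2K)⌋`, and let `x_1,…,x_{n'}` be independent uniformly random
`K`-element subsets of `[n]`.  Then with probability at least
`1 − exp(−2^{−(2K+3)}·n')`, the number of indices `r` such that `x_r` is disjoint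
from `x_s` for every `s < r` is at least `2^{−(K+2)}·n'`. -/
theorem greedy_disjoint_concentration {Ω : Type*} [MeasureSpace Ω]
    [IsProbabilityMeasure (ℙ : Measure Ω)]
    (K n : ℕ) (hK : 1 ≤ K) (hn : 4 * K ^ 2 ≤ n)
    (n' : ℕ) (hn' : n' = n / (2 * K))
    [MeasurableSpace (Finset (Fin n))] [MeasurableSingletonClass (Finset (Fin n))]
    (X : Fin n' → Ω → Finset (Fin n))
    (hmeas : ∀ r, Measurable (X r))
    (hcard : ∀ r ω, (X r ω).card = K)
    (hunif : ∀ (r : Fin n') (A : Finset (Fin n)), A.card = K →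
      ℙ {ω | X r ω = A} = ((n.choose K : ENNReal))⁻¹)
    (hindep : iIndepFun X ℙ) :
    1 - ENNReal.ofReal (Real.exp (-(2 : ℝ) ^ (-(2 * (K : ℝ) + 3)) * (n' : ℝ))) ≤
      ℙ {ω | (2 : ℝ) ^ (-((K : ℝ) + 2)) * (n' : ℝ) ≤
        (Nat.card {r : Fin n' // ∀ s : Fin n', s < r → Disjoint (X r ω) (X s ω)} : ℝ)} := by
  classical
  set a : ℝ := (2 : ℝ) ^ (-((K : ℝ) + 2)) * (n' : ℝ) with ha
  set E : ℝ := Real.exp (-(2 : ℝ) ^ (-(2 * (K : ℝ) + 3)) * (n' : ℝ)) with hE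
  have hKn : K ≤ n := by nlinarith
  have hC : 0 < n.choose K := Nat.choose_pos hKn
  have hm : 2 * K * n' ≤ n := by rw [hn']; exact Nat.mul_div_le n (2 * K)
  set B : Finset (Fin n' → GdcT K n) := Finset.univ.filter (fun f : Fin n' → GdcT K n =>
      (Nat.card {r : Fin n' // ∀ s : Fin n', s < r → Disjoint (f r).1 (f s).1} : ℝ) < a) with hB
  set good : Set Ω := {ω | a ≤
    (Nat.card {r : Fin n' // ∀ s : Fin n', s < r → Disjoint (X r ω) (X s ω)} : ℝ)} with hgood
  have hsub : goodᶜ ⊆ ⋃ f ∈ B, ⋂ r ∈ (Finset.univ : Finset (Fin n')), X r ⁻¹' {(f r).1} := by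
    intro ω hω
    simp only [hgood, Set.mem_compl_iff, Set.mem_setOf_eq, not_le] at hω
    simp only [Set.mem_iUnion]
    refine ⟨fun r => ⟨X r ω, hcard r ω⟩, ?_, ?_⟩
    · rw [hB, Finset.mem_filter]
      exact ⟨Finset.mem_univ _, hω⟩
    · simp
  have hpt : ∀ f : Fin n' → GdcT K n,
      ℙ (⋂ r ∈ (Finset.univ : Finset (Fin n')), X r ⁻¹' {(f r).1})
        = ((n.choose K : ENNReal))⁻¹ ^ n' := by
    intro f
    rw [hindep.measure_inter_preimage_eq_mul Finset.univ
      (fun r _ => measurableSet_singleton _)]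
    rw [Finset.prod_congr rfl (fun r _ => show ℙ (X r ⁻¹' {(f r).1}) = _ from
      hunif r (f r).1 (f r).2)]
    simp
  have hbad : ℙ goodᶜ ≤ ENNReal.ofReal E := by
    calc ℙ goodᶜ ≤ _ := measure_mono hsub
      _ ≤ ∑ f ∈ B, ℙ (⋂ r ∈ (Finset.univ : Finset (Fin n')), X r ⁻¹' {(f r).1}) :=
        measure_biUnion_finset_le _ _
      _ = (B.card : ENNReal) * ((n.choose K : ENNReal))⁻¹ ^ n' := by
        rw [Finset.sum_congr rfl (fun f _ => hpt f)]; simp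
      _ = ENNReal.ofReal ((B.card : ℝ) * ((n.choose K : ℝ))⁻¹ ^ n') := by
        rw [ENNReal.ofReal_mul (by positivity), ENNReal.ofReal_pow (by positivity),
          ENNReal.ofReal_inv_of_pos (by exact_mod_cast hC), ENNReal.ofReal_natCast,
          ENNReal.ofReal_natCast]
      _ ≤ ENNReal.ofReal E := by
        apply ENNReal.ofReal_le_ofReal
        have h1 := gdc_bad K n n' hm a
        have h2 := gdc_num K n'
        have hC' : (0 : ℝ) < n.choose K := by exact_mod_cast hC
        rw [inv_pow, ← div_eq_mul_inv, div_le_iff₀ (by positivity)]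
        calc (B.card : ℝ) ≤ _ := h1
          _ = (2 ^ a * (1 - (1 / 2) ^ K / 2) ^ n') * (n.choose K : ℝ) ^ n' := by
            rw [mul_pow]; ring
          _ ≤ _ := mul_le_mul_of_nonneg_right h2 (by positivity)
  rw [tsub_le_iff_right]
  calc (1 : ENNReal) = ℙ (Set.univ : Set Ω) := measure_univ.symm
    _ = ℙ (good ∪ goodᶜ) := by rw [Set.union_compl_self]
    _ ≤ ℙ good + ℙ goodᶜ := measure_union_le _ _
    _ ≤ _ := by gcongr
end

section
/- Let K ≥ 1, m ≥ 1 and let M be an integer with M ≥ 2^{K+2}·log₂(m), and let n ≥ KM. Fix an assignment ψ ∈ {±1}^n and let x_1, …, x_m be independent uniformly random elements of X_{n,KM}. Then the probability that ψ satisfies all m random ¬T_{K,M}-constraints, i.e., that T_{K,M}(U_{x_i}(ψ)) = 0 for every i ∈ [m], is at least 1 − 1/m. -/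
open MeasureTheory ProbabilityTheory

/-- A signed `J`-tuple over `[n]`: a vector of signs `α ∈ {±1}^J` (`true` encodes
`+1`) together with `J` distinct indices in `[n]`. -/
def SignedTuple (n J : ℕ) : Type := (Fin J → Bool) × (Fin J ↪ Fin n)

/-- `U_x(ψ) = (α_1·ψ_{i_1}, …, α_J·ψ_{i_J})`, where `true` encodes `+1`. -/
def Ux {n J : ℕ} (x : SignedTuple n J) (ψ : Fin n → Bool) : Fin J → Bool :=
  fun j => x.1 j == ψ (x.2 j)

/-- The predicate `T_{K,M} : {±1}^{KM} → {0,1}`: `T_{K,M}(z) = 1` iff each of the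
`M` consecutive blocks of `K` coordinates of `z` contains at least one `+1`. -/
def TKM (K M : ℕ) (z : Fin (K * M) → Bool) : Prop :=
  ∀ j : Fin M, ∃ i : Fin K,
    z ⟨(j : ℕ) * K + (i : ℕ), by
      calc (j : ℕ) * K + (i : ℕ) < (j : ℕ) * K + K := Nat.add_lt_add_left i.isLt _
        _ = ((j : ℕ) + 1) * K := by ring
        _ ≤ M * K := Nat.mul_le_mul_right K j.isLt
        _ = K * M := Nat.mul_comm M K⟩ = true


lemma idx_lt {K M : ℕ} (j : Fin M) (i : Fin K) : (j : ℕ) * K + (i : ℕ) < K * M := by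
  calc (j : ℕ) * K + (i : ℕ) < (j : ℕ) * K + K := Nat.add_lt_add_left i.isLt _
    _ = ((j : ℕ) + 1) * K := by ring
    _ ≤ M * K := Nat.mul_le_mul_right K j.isLt
    _ = K * M := Nat.mul_comm M K

lemma card_block (K : ℕ) : Nat.card {w : Fin K → Bool // ∃ i, w i = true} = 2 ^ K - 1 := by
  classical
  have h : ∀ w : Fin K → Bool, (∃ i, w i = true) ↔ ¬ (w = fun _ => false) := by
    intro w
    rw [funext_iff]
    push Not
    simp
  simp_rw [h]
  rw [Nat.card_eq_fintype_card, Fintype.card_subtype_compl]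
  simp

lemma card_TKM (K M : ℕ) (hK : 1 ≤ K) :
    Nat.card {z : Fin (K * M) → Bool // TKM K M z} ≤ (2 ^ K - 1) ^ M := by
  classical
  have h := Nat.card_le_card_of_injective
    (fun (z : {z : Fin (K * M) → Bool // TKM K M z}) (j : Fin M) =>
      (⟨fun i : Fin K => z.1 ⟨(j : ℕ) * K + (i : ℕ), idx_lt j i⟩, z.2 j⟩ :
        {w : Fin K → Bool // ∃ i, w i = true})) (by
      intro z z' h
      apply Subtype.ext
      funext p
      have hp : (p : ℕ) / K < M := Nat.div_lt_of_lt_mul p.2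
      have h1 := congrFun h ⟨(p : ℕ) / K, hp⟩
      have h2 := congrFun (Subtype.ext_iff.mp h1) ⟨(p : ℕ) % K, Nat.mod_lt _ hK⟩
      have h3 : (⟨(p : ℕ) / K * K + (p : ℕ) % K,
          idx_lt (⟨(p : ℕ) / K, hp⟩ : Fin M) (⟨(p : ℕ) % K, Nat.mod_lt _ hK⟩ : Fin K)⟩
          : Fin (K * M)) = p := Fin.ext (Nat.div_add_mod' _ _)
      simp only [h3] at h2
      exact h2)
  rw [Nat.card_fun, card_block, Nat.card_fin] at h
  exact h

instance signedTupleFinite (n J : ℕ) : Finite (SignedTuple n J) :=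
  inferInstanceAs (Finite ((Fin J → Bool) × (Fin J ↪ Fin n)))

lemma card_signed (n J : ℕ) :
    Nat.card (SignedTuple n J) = 2 ^ J * Nat.card (Fin J ↪ Fin n) := by
  have : Nat.card (SignedTuple n J) = Nat.card ((Fin J → Bool) × (Fin J ↪ Fin n)) := rfl
  rw [this, Nat.card_prod, Nat.card_fun]
  simp

lemma card_bad (K M n : ℕ) (hK : 1 ≤ K) (ψ : Fin n → Bool) :
    Nat.card {x : SignedTuple n (K * M) // TKM K M (Ux x ψ)} ≤
      (2 ^ K - 1) ^ M * Nat.card (Fin (K * M) ↪ Fin n) := by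
  have h := Nat.card_le_card_of_injective
    (fun (x : {x : SignedTuple n (K * M) // TKM K M (Ux x ψ)}) =>
      ((⟨Ux x.1 ψ, x.2⟩, x.1.2) :
        {z : Fin (K * M) → Bool // TKM K M z} × (Fin (K * M) ↪ Fin n))) (by
      rintro ⟨⟨a, e⟩, hx⟩ ⟨⟨b, f⟩, hy⟩ h
      simp only [Prod.mk.injEq, Subtype.mk.injEq] at h
      obtain ⟨h1, rfl⟩ := h
      apply Subtype.ext
      refine Prod.ext ?_ rfl
      funext j
      have := congrFun h1 j
      simp only [Ux] at this
      revert this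
      show _ → a j = b j
      cases a j <;> cases b j <;> cases ψ (e j) <;> simp)
  rw [Nat.card_prod] at h
  exact h.trans (Nat.mul_le_mul_right _ (card_TKM K M hK))

lemma key_bound (K m M : ℕ) (hm : 1 ≤ m)
    (hM : (2 : ℝ) ^ (K + 2) * Real.logb 2 (m : ℝ) ≤ (M : ℝ)) :
    m * m * (2 ^ K - 1) ^ M ≤ 2 ^ (K * M) := by
  have hm0 : (0 : ℝ) < m := by exact_mod_cast hm
  have hlog : 0 ≤ Real.log m := Real.log_nonneg (by exact_mod_cast hm)
  have h2 : (0 : ℝ) < 2 ^ K := by positivity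
  have hl2 : 0 < Real.log 2 := Real.log_pos (by norm_num)
  have hl2' : Real.log 2 ≤ 1 := by linarith [Real.log_two_lt_d9]
  have hlb : Real.log m ≤ Real.logb 2 m := by
    rw [Real.logb, le_div_iff₀ hl2]
    nlinarith
  have hA : 2 * Real.log m ≤ M * ((2 : ℝ) ^ K)⁻¹ := by
    rw [← div_eq_mul_inv, le_div_iff₀ h2]
    have : (2 : ℝ) ^ K * Real.log m ≤ 2 ^ K * Real.logb 2 m :=
      mul_le_mul_of_nonneg_left hlb h2.le
    have h4 : 0 ≤ (2 : ℝ) ^ K * Real.log m := by positivity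
    rw [pow_add] at hM
    nlinarith
  have h1 : (1 : ℝ) - ((2 : ℝ) ^ K)⁻¹ ≤ Real.exp (-((2 : ℝ) ^ K)⁻¹) := by
    linarith [Real.add_one_le_exp (-((2 : ℝ) ^ K)⁻¹)]
  have h0 : (0 : ℝ) ≤ 1 - ((2 : ℝ) ^ K)⁻¹ := by
    have : ((2 : ℝ) ^ K)⁻¹ ≤ 1 := inv_le_one_of_one_le₀ (one_le_pow₀ (by norm_num))
    linarith
  have h3 := pow_le_pow_left₀ h0 h1 M
  rw [← Real.exp_nat_mul] at h3
  have h5 : (m : ℝ) * m * (1 - ((2 : ℝ) ^ K)⁻¹) ^ M ≤ 1 := by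
    have e : (m : ℝ) * m = Real.exp (2 * Real.log m) := by
      rw [two_mul, Real.exp_add, Real.exp_log hm0]
    calc (m : ℝ) * m * (1 - ((2 : ℝ) ^ K)⁻¹) ^ M
        ≤ Real.exp (2 * Real.log m) * Real.exp (M * -((2 : ℝ) ^ K)⁻¹) := by
          rw [e]; exact mul_le_mul_of_nonneg_left h3 (Real.exp_pos _).le
      _ = Real.exp (2 * Real.log m + M * -((2 : ℝ) ^ K)⁻¹) := (Real.exp_add _ _).symm
      _ ≤ 1 := by rw [Real.exp_le_one_iff]; linarith
  have h6 : ((2 : ℝ) ^ K - 1) = 2 ^ K * (1 - ((2 : ℝ) ^ K)⁻¹) := by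
    field_simp
  have h7 : (m : ℝ) * m * (2 ^ K - 1) ^ M ≤ 2 ^ (K * M) := by
    rw [h6, mul_pow, pow_mul]
    have : (0 : ℝ) ≤ (2 ^ K) ^ M := by positivity
    nlinarith
  have h8 : (((2 ^ K - 1 : ℕ)) : ℝ) = 2 ^ K - 1 := by
    rw [Nat.cast_sub Nat.one_le_two_pow]; push_cast; ring
  rw [← h8] at h7
  exact_mod_cast h7

/-- Satisfiability-preservation claim in the proof of Lemma 3.3: if
`M ≥ 2^{K+2}·log₂ m` and `x_1,…,x_m` are independent uniformly random elements of
`X_{n,KM}`, then a fixed assignment `ψ` satisfies all `m` random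
`¬T_{K,M}`-constraints (i.e. `T_{K,M}(U_{x_i}(ψ)) = 0` for all `i`) with
probability at least `1 − 1/m`. -/
theorem random_negTKM_satisfied (K m M n : ℕ) (hK : 1 ≤ K) (hm : 1 ≤ m)
    (hM : (2 : ℝ) ^ (K + 2) * Real.logb 2 (m : ℝ) ≤ (M : ℝ)) (hn : K * M ≤ n)
    (ψ : Fin n → Bool)
    {Ω : Type*} [MeasureSpace Ω] [IsProbabilityMeasure (ℙ : Measure Ω)]
    [MeasurableSpace (SignedTuple n (K * M))]
    (X : Fin m → Ω → SignedTuple n (K * M))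
    (hunif : ∀ (i : Fin m) (a : SignedTuple n (K * M)),
      ℙ {ω | X i ω = a} = (Nat.card (SignedTuple n (K * M)) : ENNReal)⁻¹)
    (hindep : iIndepFun X ℙ) :
    1 - (m : ENNReal)⁻¹ ≤ ℙ {ω | ∀ i : Fin m, ¬ TKM K M (Ux (X i ω) ψ)} := by
  classical
  haveI : Fintype (SignedTuple n (K * M)) := Fintype.ofFinite _
  set N := Nat.card (SignedTuple n (K * M)) with hN
  set B := Nat.card {x : SignedTuple n (K * M) // TKM K M (Ux x ψ)} with hB
  have hNpos : N ≠ 0 := by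
    have : Nonempty (Fin (K * M) ↪ Fin n) := ⟨Fin.castLEEmb hn⟩
    rw [hN, card_signed]
    exact mul_ne_zero (by positivity) Nat.card_pos.ne'
  have hBN : m * m * B ≤ N := by
    rw [hN, card_signed]
    calc m * m * B ≤ m * m * ((2 ^ K - 1) ^ M * Nat.card (Fin (K * M) ↪ Fin n)) :=
          Nat.mul_le_mul_left _ (card_bad K M n hK ψ)
      _ = (m * m * (2 ^ K - 1) ^ M) * Nat.card (Fin (K * M) ↪ Fin n) := by ring
      _ ≤ _ := Nat.mul_le_mul_right _ (key_bound K m M hm hM)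
  have hbad : ∀ i : Fin m, ℙ {ω | TKM K M (Ux (X i ω) ψ)} ≤ (B : ENNReal) * (N : ENNReal)⁻¹ := by
    intro i
    have hsub : {ω | TKM K M (Ux (X i ω) ψ)} ⊆
        ⋃ a ∈ Finset.univ.filter (fun a : SignedTuple n (K * M) => TKM K M (Ux a ψ)),
          {ω | X i ω = a} := by
      intro ω hω
      simp only [Set.mem_iUnion]
      exact ⟨X i ω, by simpa using hω, rfl⟩
    refine (measure_mono hsub).trans ((measure_biUnion_finset_le _ _).trans ?_)
    rw [Finset.sum_congr rfl (fun a _ => hunif i a), Finset.sum_const, nsmul_eq_mul]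
    rw [hB, Nat.card_eq_fintype_card, Fintype.card_subtype]
  have hcover : (Set.univ : Set Ω) ⊆ {ω | ∀ i : Fin m, ¬ TKM K M (Ux (X i ω) ψ)} ∪
      ⋃ i ∈ (Finset.univ : Finset (Fin m)), {ω | TKM K M (Ux (X i ω) ψ)} := by
    intro ω _
    by_cases h : ∀ i : Fin m, ¬ TKM K M (Ux (X i ω) ψ)
    · exact Or.inl h
    · push Not at h
      obtain ⟨i, hi⟩ := h
      right
      simp only [Set.mem_iUnion]
      exact ⟨i, Finset.mem_univ _, hi⟩
  have hsum : ∑ i : Fin m, ℙ {ω | TKM K M (Ux (X i ω) ψ)} ≤ (m : ENNReal)⁻¹ := by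
    refine (Finset.sum_le_sum (fun i _ => hbad i)).trans ?_
    rw [Finset.sum_const, nsmul_eq_mul, Finset.card_univ, Fintype.card_fin]
    have hN0 : (N : ENNReal) ≠ 0 := by exact_mod_cast hNpos
    rw [ENNReal.le_inv_iff_mul_le]
    have e : (m : ENNReal) * (B * (N : ENNReal)⁻¹) * m = ((m * m * B : ℕ) : ENNReal) * (N : ENNReal)⁻¹ := by
      push_cast; ring
    rw [e, ← div_eq_mul_inv]
    apply ENNReal.div_le_of_le_mul
    rw [one_mul]
    exact_mod_cast hBN
  rw [tsub_le_iff_right]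
  calc (1 : ENNReal) = ℙ (Set.univ : Set Ω) := measure_univ.symm
    _ ≤ _ := measure_mono hcover
    _ ≤ _ := measure_union_le _ _
    _ ≤ _ := by
      gcongr
      exact (measure_biUnion_finset_le _ _).trans hsum
end
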